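/- arXiv:math/0412124 — 2 statements merged into one kernel-verified Lean document; each statement's English description precedes it below -/
import Mathlib

section
/- The Tchebyshev transform T on ab-polynomials and the linear map σ(u) = Σ_u κ(u_(1))·b·T(u_(2)) satisfy the joint recursion: T(1) = 1; T(a·u) = (a+b)·T(u) + (a−b)·σ(u); T(b·u) = 2b·T(u) + (a−b)·σ(u); σ(1) = 0; σ(a·u) = b·T(u) + (a−b)·σ(u); and σ(b·u) = b·T(u), for all u ∈ ℤ⟨a,b⟩. -/
open scoped TensorProduct

noncomputable section

namespace Tcheb

/-! ### The algebra `R⟨a,b⟩` of ab-polynomials -/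

/-- Words in the two noncommuting letters `a` (encoded `true`) and `b` (encoded `false`). -/
abbrev ABWord : Type := FreeMonoid Bool

/-- The ring `R⟨a,b⟩` of polynomials in two noncommuting variables `a` and `b`. -/
abbrev AB (R : Type) [CommRing R] : Type := MonoidAlgebra R ABWord

variable (R : Type) [CommRing R]

/-- The ab-monomial corresponding to a word. -/
def word (l : List Bool) : AB R := MonoidAlgebra.of R ABWord (FreeMonoid.ofList l)

/-- The variable `a`. -/
def av : AB R := word R [true]
/-- The variable `b`. -/
def bv : AB R := word R [false]
/-- `c = a + b`. -/
def cv : AB R := av R + bv R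
/-- `d = ab + ba`. -/
def dv : AB R := av R * bv R + bv R * av R
/-- `a - b`. -/
def ev : AB R := av R - bv R

/-- The linear map defined by prescribing values on the basis of ab-monomials. -/
def onBasis {M : Type} [AddCommMonoid M] [Module R M] (f : List Bool → M) :
    AB R →ₗ[R] M :=
  (Finsupp.lift M R ABWord fun w => f (FreeMonoid.toList w)) ∘ₗ
    (MonoidAlgebra.coeffLinearEquiv R).toLinearMap

/-- The algebra map `A` with `A(a) = 1`, `A(b) = 0`. -/
def Amap : AB R →ₐ[R] R :=
  MonoidAlgebra.lift R R ABWord (FreeMonoid.lift fun x => if x then (1 : R) else 0)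

/-- The coproduct on `R⟨a,b⟩`: on an ab-monomial `u₁ ⋯ u_k` it is
`Σ_{i=1}^k u₁ ⋯ u_{i-1} ⊗ u_{i+1} ⋯ u_k`. -/
def Delta : AB R →ₗ[R] AB R ⊗[R] AB R :=
  onBasis R fun w => ∑ i ∈ Finset.range w.length,
    word R (w.take i) ⊗ₜ[R] word R (w.drop (i + 1))

/-- The linear map `C(u) = 2·A(u) + Σ_u A(u₍₁₎)·A(u₍₂₎)`. -/
def Cmap : AB R →ₗ[R] R :=
  2 • (Amap R).toLinearMap +
    (LinearMap.mul' R R ∘ₗ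
      TensorProduct.map (Amap R).toLinearMap (Amap R).toLinearMap) ∘ₗ Delta R

/-- `κ(u) = A(u)·(a-b)^(deg u)` on homogeneous `u`, extended linearly. -/
def kappa : AB R →ₗ[R] AB R :=
  onBasis R fun w => Amap R (word R w) • ev R ^ w.length

/-- `ν(u) = C(u)·(a-b)^(deg u)` on homogeneous `u`, extended linearly. -/
def nuMap : AB R →ₗ[R] AB R :=
  onBasis R fun w => Cmap R (word R w) • ev R ^ w.length

end Tcheb

namespace Tcheb

/-- Cutting a word into the list of segments between the (sorted) cut positions. -/
def segments : List Bool → List ℕ → List (List Bool)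
  | l, [] => [l]
  | l, i :: rest => l.take i :: segments (l.drop (i + 1)) (rest.map fun j => j - (i + 1))
  termination_by _ cuts => cuts.length
  decreasing_by simp

variable (R : Type) [CommRing R]

/-- For segments `[s₁, …, s_k]` this is `ν(s₁)·b·ν(s₂)·b ⋯ b·ν(s_{k-1})·b·κ(s_k)`. -/
def chainProd : List (List Bool) → AB R
  | [] => 1
  | [s] => kappa R (word R s)
  | s :: rest => nuMap R (word R s) * bv R * chainProd rest

/-- The Tchebyshev transform (of the first kind) on ab-polynomials:
`T(u) = Σ_{k ≥ 1} Σ_u ν(u₍₁₎)·b·ν(u₍₂₎)·b ⋯ b·ν(u₍ₖ₋₁₎)·b·κ(u₍ₖ₎)`,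
where the inner sum is over the `k`-fold coproduct.  On the ab-monomial basis this
is the sum, over all sets of positions of deleted letters, of the corresponding
products over the resulting segments. -/
def Tmap : AB R →ₗ[R] AB R :=
  onBasis R fun w => ∑ S : Finset (Fin w.length),
    chainProd R (segments w ((S.sort (· ≤ ·)).map Fin.val))

/-- The `ω` map on a word: replace each occurrence of `ab` by `2d` and all
remaining letters by `c`. -/
def omegaWord : List Bool → AB R
  | [] => 1
  | true :: false :: rest => (2 * dv R) * omegaWord rest
  | _ :: rest => cv R * omegaWord rest

/-- The `ω` map of Billera–Ehrenborg–Readdy. -/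
def omegaMap : AB R →ₗ[R] AB R := onBasis R fun w => omegaWord R w

/-- The reversal involution `u ↦ u*` of ab-polynomials. -/
def revMap : AB R →ₗ[R] AB R := onBasis R fun w => word R w.reverse

/-- `H*(1) = 0` and `H*(u·a) = H*(u·b) = u`. -/
def Hstar : AB R →ₗ[R] AB R :=
  onBasis R fun w => if w = [] then 0 else word R w.dropLast

/-- The Tchebyshev transform of the second kind `U(u) = H*(T(u·a))`. -/
def Umap : AB R →ₗ[R] AB R := Hstar R ∘ₗ Tmap R ∘ₗ LinearMap.mulRight R (av R)

/-- `σ(u) = Σ_u κ(u₍₁₎)·b·T(u₍₂₎)`. -/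
def sigmaMap : AB R →ₗ[R] AB R :=
  LinearMap.mul' R (AB R) ∘ₗ
    TensorProduct.map (LinearMap.mulRight R (bv R) ∘ₗ kappa R) (Tmap R) ∘ₗ Delta R

/-! ### Graded posets and the ab-index -/

/-- `rk` is a rank function for a bounded poset: `rk ⊥ = 0` and covers raise rank by one. -/
def IsRankFun (α : Type) [PartialOrder α] [OrderBot α] (rk : α → ℕ) : Prop :=
  rk ⊥ = 0 ∧ ∀ x y : α, x ⋖ y → rk y = rk x + 1

/-- `f` lists the elements of a chain in increasing order with respect to the
strict order relation `lt`. -/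
def IsStrictChain {α : Type} (lt : α → α → Prop) {n : ℕ} (f : Fin (n + 1) → α) : Prop :=
  ∀ i j : Fin (n + 1), i < j → lt (f i) (f j)

/-- The weight of a chain `x₀ < x₁ < ⋯ < x_k`:
`(a-b)^{ρ(x₀,x₁)-1}·b·(a-b)^{ρ(x₁,x₂)-1}·b ⋯ b·(a-b)^{ρ(x_{k-1},x_k)-1}`. -/
def chainWt {α : Type} (rk : α → ℕ) {n : ℕ} (f : Fin (n + 1) → α) : AB R :=
  (List.intersperse (bv R)
    (List.ofFn fun i : Fin n => ev R ^ (rk (f i.succ) - rk (f i.castSucc) - 1))).prod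

/-- The ab-index `Ψ` of the graded poset with strict order relation `lt`, rank
function `rk`, minimum `b` and maximum `t`: the sum of the weights of all chains
from `b` to `t`. -/
def PsiRel {α : Type} (lt : α → α → Prop) (rk : α → ℕ) (b t : α) : AB R :=
  ∑ᶠ (n : ℕ), ∑ᶠ (f : Fin (n + 1) → α)
    (_ : IsStrictChain lt f ∧ f 0 = b ∧ f (Fin.last n) = t), chainWt R rk f

end Tcheb

namespace Tcheb

/-! ### The Tchebyshev transform of a graded poset -/

section TPoset

variable (α : Type) [PartialOrder α] [BoundedOrder α]

/-- The elements `[x,y]` of the Tchebyshev transform: intervals of `P ∪ {-1̂}`,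
i.e. pairs `(x,y)` with `x ∈ P ∪ {-1̂}`, `y ∈ P` and `x < y`. -/
def TPel : Type := {p : WithBot α × α // p.1 < (p.2 : WithBot α)}

/-- The underlying set of the Tchebyshev transform `T(P)`: the intervals `[x,y]`
together with a new maximum element (`none`). -/
def TP : Type := Option (TPel α)

/-- The cover relation of the Tchebyshev transform `T(P)`:
`[x,y] ⋖ [y,w]` and `[x,y] ⋖ [x,w]` whenever `y ⋖ w` in `P`, and `[x,1̂] ⋖ 1̂_{T(P)}`. -/
inductive TPcov : TP α → TP α → Prop
  | up {x : WithBot α} {y w : α} (h1 : x < (y : WithBot α))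
      (h2 : (y : WithBot α) < (w : WithBot α)) (hc : y ⋖ w) :
      TPcov (some ⟨(x, y), h1⟩) (some ⟨((y : WithBot α), w), h2⟩)
  | same {x : WithBot α} {y w : α} (h1 : x < (y : WithBot α))
      (h2 : x < (w : WithBot α)) (hc : y ⋖ w) :
      TPcov (some ⟨(x, y), h1⟩) (some ⟨(x, w), h2⟩)
  | top {x : WithBot α} (h1 : x < ((⊤ : α) : WithBot α)) :
      TPcov (some ⟨(x, (⊤ : α)), h1⟩) none

/-- The strict order relation of `T(P)`, generated by the cover relation. -/
def TPlt : TP α → TP α → Prop := Relation.TransGen (TPcov α)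

/-- The order relation of `T(P)`, generated by the cover relation. -/
def TPle : TP α → TP α → Prop := Relation.ReflTransGen (TPcov α)

/-- The minimum element `[-1̂, 0̂]` of `T(P)`. -/
def TPbot : TP α := some ⟨((⊥ : WithBot α), (⊥ : α)), WithBot.bot_lt_coe _⟩

/-- The maximum element `1̂_{T(P)}` of `T(P)`. -/
def TPtop : TP α := none

/-- The rank function of `T(P)`: `ρ([x,y]) = ρ(y)` and `ρ(1̂_{T(P)}) = ρ(P) + 1`. -/
def TPrk (rk : α → ℕ) : TP α → ℕ
  | some p => rk p.1.2
  | none => rk (⊤ : α) + 1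

theorem TPbot_ne_TPtop : TPbot α ≠ TPtop α := by exact Option.some_ne_none _

/-- The map `z : T(P) → P ∪ {2̂}` with `z([x,y]) = y` and `z(1̂_{T(P)}) = 2̂`. -/
def zmap : TP α → WithTop α
  | some p => (p.1.2 : WithTop α)
  | none => ⊤

/-- The number of elements of the interval `[u,v]` of `P`, for `u, v ∈ P ∪ {2̂}`. -/
def intervalCard (u v : WithTop α) : ℕ :=
  Set.ncard {t : α | u ≤ (t : WithTop α) ∧ (t : WithTop α) ≤ v}

end TPoset

/-! ### The dual diamond product -/

/-- The strict order relation of the dual diamond product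
`P ◇* Q = ((P ∖ {1̂}) × (Q ∖ {1̂})) ∪ {1̂}` (with `none` the new maximum), built from
the order relations `leA, ltA` and `leB, ltB` of the two factors. -/
def dsLT {A B : Type} (leA ltA : A → A → Prop) (leB ltB : B → B → Prop) :
    Option (A × B) → Option (A × B) → Prop
  | some p, some q => (leA p.1 q.1 ∧ leB p.2 q.2) ∧ (ltA p.1 q.1 ∨ ltB p.2 q.2)
  | some _, none => True
  | none, _ => False

/-! ### EL-labelings -/

/-- The list of edge labels along a chain (given as a list of poset elements). -/
def labelsList {α Λ : Type} (lam : α → α → Λ) (l : List α) : List Λ :=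
  (l.zip l.tail).map fun p => lam p.1 p.2

/-- `l` is a maximal (saturated) chain of the interval `[x,y]` with respect to the
cover relation `cov`: it runs from `x` to `y` and every step is a cover. -/
def IsMaxChainList {α : Type} (cov : α → α → Prop) (x y : α) (l : List α) : Prop :=
  l.head? = some x ∧ l.getLast? = some y ∧ l.Chain' cov

/-- An `EL`-labeling of the poset whose cover relation is `cov`, with labels in the
linearly ordered set `(Λ, lle, llt)`: every interval has a unique rising maximal
chain, which moreover is lexicographically least among all maximal chains of the
interval. -/
def IsELLabeling (α Λ : Type) (lle llt : Λ → Λ → Prop)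
    (cov : α → α → Prop) (lam : α → α → Λ) : Prop :=
  ∀ x y : α, Relation.ReflTransGen cov x y →
    ∃ l : List α, (IsMaxChainList cov x y l ∧ (labelsList lam l).Chain' lle) ∧
      (∀ l' : List α, IsMaxChainList cov x y l' →
        (labelsList lam l').Chain' lle → l' = l) ∧
      (∀ l' : List α, IsMaxChainList cov x y l' →
        labelsList lam l = labelsList lam l' ∨
          List.Lex llt (labelsList lam l) (labelsList lam l'))

/-! ### Eulerian posets -/

/-- A graded poset is Eulerian if every nontrivial interval `[x,y]` has the
same number of elements of even rank as of odd rank. -/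
def IsEulerian (α : Type) [PartialOrder α] (rk : α → ℕ) : Prop :=
  ∀ x y : α, x < y →
    Set.ncard {z : α | x ≤ z ∧ z ≤ y ∧ Even (rk z)} =
      Set.ncard {z : α | x ≤ z ∧ z ≤ y ∧ ¬ Even (rk z)}

/-! ### The face lattice of the crosspolytope -/

/-- A face of the `n`-dimensional crosspolytope: a partial sign vector, i.e. the
pair `(S, ε)` of a subset `S ⊆ {1,…,n}` (the set of coordinates where the function
takes a value `some`) together with a sign function `ε` on `S`. -/
def CrossEl (n : ℕ) : Type := Fin n → Option Bool

/-- `(S,ε) ≤ (T,δ)` iff `S ⊆ T` and `δ` restricted to `S` is `ε`. -/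
instance (n : ℕ) : PartialOrder (CrossEl n) where
  le f g := ∀ i s, f i = some s → g i = some s
  le_refl f i s h := h
  le_trans f g h fg gh i s hi := gh i s (fg i s hi)
  le_antisymm f g fg gf := by
    funext i
    cases hf : f i with
    | some s => exact (fg i s hf).symm
    | none =>
      cases hg : g i with
      | some s => exact absurd (gf i s hg) (by simp [hf])
      | none => rfl

/-- The face lattice of the `n`-dimensional crosspolytope: all partial sign
vectors together with a new maximum element. -/
abbrev Cross (n : ℕ) : Type := WithTop (CrossEl n)

/-- The rank function of the face lattice of the crosspolytope:
`ρ(S,ε) = |S|` and the maximum has rank `n + 1`. -/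
def crossRk (n : ℕ) : Cross n → ℕ
  | none => n + 1
  | some f => (Finset.univ.filter fun i : Fin n => (f i).isSome).card

/-- The minimal element (the empty face) of the crosspolytope face lattice. -/
def crossBot (n : ℕ) : Cross n := WithTop.some (fun _ => none)

/-- The maximal element of the crosspolytope face lattice. -/
def crossTop (n : ℕ) : Cross n := ⊤

/-! ### Quasisymmetric functions -/

/-- The monomial quasisymmetric function `M_{(p₁,…,p_k)}`, as a formal power
series in the countably many commuting variables `t₁, t₂, …` (indexed by `ℕ`). -/
def MQ (R : Type) [CommRing R] (ps : List ℕ) : MvPowerSeries ℕ R :=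
  fun m => if ((m.support.sort (· ≤ ·)).map fun i => m i) = ps then 1 else 0

/-- The `t`-part of a monomial in the variables `s` (index `none`) and
`t₁, t₂, …` (indices `some i`). -/
def tpart (m : Option ℕ →₀ ℕ) : ℕ →₀ ℕ :=
  Finsupp.comapDomain some m (Option.some_injective ℕ).injOn

/-- The type B monomial quasisymmetric function `s^p · M_{(p₁,…,p_k)}`, a formal
power series in the variables `s` (index `none`) and `t₁, t₂, …` (indices `some i`). -/
def MB (R : Type) [CommRing R] (p : ℕ) (ps : List ℕ) : MvPowerSeries (Option ℕ) R :=
  fun m => if m none = p ∧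
      (((tpart m).support.sort (· ≤ ·)).map fun i => tpart m i) = ps then 1 else 0

/-- The quasisymmetric function `F(P)` of the graded poset with strict order
relation `lt`, rank function `rk`, minimum `b` and maximum `t`:
`F(P) = Σ_c M_{(ρ(x₀,x₁),…,ρ(x_{k-1},x_k))}` over all chains `c` from `b` to `t`. -/
def FQ (R : Type) [CommRing R] {α : Type} (lt : α → α → Prop) (rk : α → ℕ)
    (b t : α) : MvPowerSeries ℕ R :=
  ∑ᶠ (n : ℕ), ∑ᶠ (f : Fin (n + 1) → α)
    (_ : IsStrictChain lt f ∧ f 0 = b ∧ f (Fin.last n) = t),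
    MQ R (List.ofFn fun i : Fin n => rk (f i.succ) - rk (f i.castSucc))

/-- The type B quasisymmetric function `F_B(P) = Σ_{0̂ < x ≤ 1̂} s^{ρ(x)-1}·F([x,1̂])`,
written as a sum over all chains `0̂ < x₀ < x₁ < ⋯ < x_k = 1̂` of
`s^{ρ(x₀)-1}·M_{(ρ(x₀,x₁),…,ρ(x_{k-1},x_k))}`. -/
def FB (R : Type) [CommRing R] {α : Type} (lt : α → α → Prop) (rk : α → ℕ)
    (b t : α) : MvPowerSeries (Option ℕ) R :=
  ∑ᶠ (n : ℕ), ∑ᶠ (f : Fin (n + 1) → α)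
    (_ : IsStrictChain lt f ∧ lt b (f 0) ∧ f (Fin.last n) = t),
    MB R (rk (f 0) - 1) (List.ofFn fun i : Fin n => rk (f i.succ) - rk (f i.castSucc))

/-! ### Characters and the chain maps -/

/-- A character on `k⟨a,b⟩`: a linear functional which is multiplicative with
respect to Cartesian products of graded posets (of rank at least 1). -/
def IsCharacter (k : Type) [Field k] (G : AB k →ₗ[k] k) : Prop :=
  ∀ (α β : Type) [Fintype α] [Fintype β] [PartialOrder α] [PartialOrder β]
    [BoundedOrder α] [BoundedOrder β], ∀ (rkα : α → ℕ) (rkβ : β → ℕ),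
    IsRankFun α rkα → IsRankFun β rkβ → 1 ≤ rkα ⊤ → 1 ≤ rkβ ⊤ →
    G (PsiRel k (· < ·) (fun p : α × β => rkα p.1 + rkβ p.2)
        ((⊥ : α), (⊥ : β)) ((⊤ : α), (⊤ : β))) =
      G (PsiRel k (· < ·) rkα ⊥ ⊤) * G (PsiRel k (· < ·) rkβ ⊥ ⊤)

/-- The quasisymmetric function image `g̃F(P)` of the chain map of the second kind:
`Σ_c G(Ψ([x₀,x₁])) ⋯ G(Ψ([x_{k-1},x_k])) · M_{(ρ(x₀,x₁),…,ρ(x_{k-1},x_k))}`,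
summed over all chains `c = {b = x₀ < ⋯ < x_k = t}`. -/
def gtF (k : Type) [Field k] (G : AB k →ₗ[k] k) {α : Type} (lt : α → α → Prop)
    (rk : α → ℕ) (b t : α) : MvPowerSeries ℕ k :=
  ∑ᶠ (n : ℕ), ∑ᶠ (f : Fin (n + 1) → α)
    (_ : IsStrictChain lt f ∧ f 0 = b ∧ f (Fin.last n) = t),
    (∏ i : Fin n, G (PsiRel k lt rk (f i.castSucc) (f i.succ))) •
      MQ k (List.ofFn fun i : Fin n => rk (f i.succ) - rk (f i.castSucc))

/-- The type B quasisymmetric function image `gF_B(P) = Σ_{0̂ < x ≤ 1̂}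
s^{ρ(x)-1}·g̃F([x,1̂])` of the chain map of the first kind, written as a sum over
all chains `0̂ < x₀ < ⋯ < x_k = 1̂`. -/
def gFB (k : Type) [Field k] (G : AB k →ₗ[k] k) {α : Type} (lt : α → α → Prop)
    (rk : α → ℕ) (b t : α) : MvPowerSeries (Option ℕ) k :=
  ∑ᶠ (n : ℕ), ∑ᶠ (f : Fin (n + 1) → α)
    (_ : IsStrictChain lt f ∧ lt b (f 0) ∧ f (Fin.last n) = t),
    (∏ i : Fin n, G (PsiRel k lt rk (f i.castSucc) (f i.succ))) •
      MB k (rk (f 0) - 1) (List.ofFn fun i : Fin n => rk (f i.succ) - rk (f i.castSucc))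

/-- The space of homogeneous ab-polynomials of degree `n`. -/
def ABhomog (k : Type) [Field k] (n : ℕ) : Submodule k (AB k) :=
  Submodule.span k {x : AB k | ∃ w : List Bool, w.length = n ∧ x = word k w}

/-! For a letter `x`, `Δ(x·u) = 1 ⊗ u + (x ⊗ 1)·Δ(u)`.  Writing
`(f ⋆ g)(u) = Σ_u f(u₍₁₎)·b·g(u₍₂₎)`, this gives
`(f ⋆ g)(x·u) = f(1)·b·g(u) + (f(x·-) ⋆ g)(u)`.  Grouping the terms of `T` by the leftmost deleted
letter yields `T = κ + ν ⋆ T`, while `σ = κ ⋆ T` by definition, so the recursion follows from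
`κ(x·u) = A(x)·(a-b)·κ(u)` and `ν(x·u) = (a-b)·(A(x)·ν(u) + κ(u))`. -/

section SubsetsOfFin

variable {M : Type*} [AddCommMonoid M]

theorem powerset_map {α β : Type*} (e : α ↪ β) (s : Finset α) :
    (s.map e).powerset = s.powerset.map (Finset.mapEmbedding e).toEmbedding := by
  ext t
  simp [Finset.subset_map_iff, eq_comm]

theorem sum_finset_fin_succ {n : ℕ} (f : Finset (Fin (n + 1)) → M) :
    ∑ S, f S = ∑ S : Finset (Fin n), f (S.map (Fin.succEmb n)) +
      ∑ S : Finset (Fin n), f (insert 0 (S.map (Fin.succEmb n))) := by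
  rw [← Finset.powerset_univ, Fin.univ_succ, Finset.cons_eq_insert,
    Finset.sum_powerset_insert (by simp [Fin.succ_ne_zero]), powerset_map, Finset.sum_map,
    Finset.sum_map, Finset.powerset_univ]
  rfl

/-- The elements of a set of cut positions in increasing order, in the form in which `segments`
takes them. -/
def cutList {n : ℕ} (S : Finset (Fin n)) : List ℕ :=
  (S.sort (· ≤ ·)).map Fin.val

theorem cutList_map_succ {n : ℕ} (S : Finset (Fin n)) :
    cutList (S.map (Fin.succEmb n)) = (cutList S).map (· + 1) := by
  have sort_map := Finset.map_sort (r := (· ≤ ·)) (r' := (· ≤ ·)) (Fin.succEmb n) S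
    fun _ _ _ _ => Fin.succ_le_succ_iff.symm
  rw [cutList, ← sort_map]
  simp [cutList, Function.comp_def]

theorem cutList_insert_zero {n : ℕ} (S : Finset (Fin n)) :
    cutList (insert 0 (S.map (Fin.succEmb n))) = 0 :: (cutList S).map (· + 1) := by
  rw [← cutList_map_succ, cutList,
    Finset.sort_insert _ (fun i _ => Fin.zero_le i) (by simp [Fin.succ_ne_zero])]
  rfl

theorem sum_cutList_eq_sum_min (n : ℕ) (g : List ℕ → M) :
    ∑ S : Finset (Fin n), g (cutList S) =
      g [] + ∑ i ∈ Finset.range n, ∑ S : Finset (Fin (n - (i + 1))),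
        g (i :: (cutList S).map (· + (i + 1))) := by
  induction n generalizing g with
  | zero =>
    rw [Fintype.sum_subsingleton _ ∅]
    simp [cutList]
  | succ n ih =>
    have shift (i : ℕ) :
        ∑ S : Finset (Fin (n + 1 - (i + 1 + 1))),
            g ((i + 1) :: (cutList S).map (· + (i + 1 + 1))) =
          ∑ S : Finset (Fin (n - (i + 1))),
            g ((i :: (cutList S).map (· + (i + 1))).map (· + 1)) := by
      rw [Nat.add_sub_add_right]
      simp [Function.comp_def, add_assoc]
    simp only [sum_finset_fin_succ, cutList_map_succ, cutList_insert_zero]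
    rw [ih fun l => g (l.map (· + 1)), Finset.sum_range_succ', ← add_assoc]
    simp only [shift, List.map_nil, zero_add]
    rfl

end SubsetsOfFin

section Recursion

variable (R : Type) [CommRing R]

theorem word_nil : word R [] = 1 :=
  map_one _

theorem word_cons (x : Bool) (w : List Bool) : word R (x :: w) = word R [x] * word R w := by
  simp only [word, ← map_mul]
  rfl

theorem onBasis_word {M : Type} [AddCommMonoid M] [Module R M] (f : List Bool → M)
    (w : List Bool) : onBasis R f (word R w) = f w := by
  simp [onBasis, word]

variable {R} in
theorem linearMap_ext_word {M : Type*} [AddCommMonoid M] [Module R M] {f g : AB R →ₗ[R] M}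
    (h : ∀ w, f (word R w) = g (word R w)) : f = g :=
  MonoidAlgebra.lhom_ext' fun w => LinearMap.ext_ring (h (FreeMonoid.toList w))

theorem Amap_av : Amap R (av R) = 1 := by
  simp [Amap, av, word]

theorem Amap_bv : Amap R (bv R) = 0 := by
  simp [Amap, bv, word]

theorem Delta_one : Delta R 1 = 0 := by
  rw [← word_nil, Delta, onBasis_word]
  rfl

theorem Delta_letter_mul (x : Bool) (u : AB R) :
    Delta R (word R [x] * u) =
      1 ⊗ₜ u + (LinearMap.mulLeft R (word R [x])).rTensor (AB R) (Delta R u) := by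
  suffices Delta R ∘ₗ LinearMap.mulLeft R (word R [x]) =
      TensorProduct.mk R (AB R) (AB R) 1 +
        (LinearMap.mulLeft R (word R [x])).rTensor (AB R) ∘ₗ Delta R from
    LinearMap.congr_fun this u
  refine linearMap_ext_word fun w => ?_
  simp [← word_cons, Delta, onBasis_word, Finset.sum_range_succ', word_nil, add_comm]

theorem Cmap_one : Cmap R 1 = 2 := by
  simp [Cmap, Delta_one]

theorem Cmap_letter_mul (x : Bool) (u : AB R) :
    Cmap R (word R [x] * u) = Amap R (word R [x]) * Cmap R u + Amap R u := by
  have pull_letter :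
      TensorProduct.map (Amap R).toLinearMap (Amap R).toLinearMap ∘ₗ
        (LinearMap.mulLeft R (word R [x])).rTensor (AB R) =
      Amap R (word R [x]) • TensorProduct.map (Amap R).toLinearMap (Amap R).toLinearMap := by
    ext
    simp [TensorProduct.smul_tmul']
  have pull_Delta := LinearMap.congr_fun pull_letter (Delta R u)
  rw [LinearMap.comp_apply, LinearMap.smul_apply] at pull_Delta
  simp only [Cmap, LinearMap.add_apply, LinearMap.smul_apply, LinearMap.comp_apply,
    AlgHom.toLinearMap_apply, Delta_letter_mul, map_add, map_mul, TensorProduct.map_tmul, map_one,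
    pull_Delta, LinearMap.mul'_apply, one_mul, map_smul, smul_eq_mul, nsmul_eq_mul, Nat.cast_ofNat]
  ring

theorem kappa_word (w : List Bool) :
    kappa R (word R w) = Amap R (word R w) • ev R ^ w.length :=
  onBasis_word R _ w

theorem nuMap_word (w : List Bool) :
    nuMap R (word R w) = Cmap R (word R w) • ev R ^ w.length :=
  onBasis_word R _ w

theorem kappa_one : kappa R 1 = 1 := by
  rw [← word_nil, kappa_word]
  simp [word_nil]

theorem nuMap_one : nuMap R 1 = 2 := by
  rw [← word_nil, nuMap_word, word_nil, Cmap_one]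
  simp [ofNat_smul_eq_nsmul]

theorem kappa_comp_mulLeft_letter (x : Bool) :
    kappa R ∘ₗ LinearMap.mulLeft R (word R [x]) =
      Amap R (word R [x]) • LinearMap.mulLeft R (ev R) ∘ₗ kappa R := by
  refine linearMap_ext_word fun w => ?_
  rw [LinearMap.comp_apply, LinearMap.mulLeft_apply, ← word_cons, kappa_word, word_cons R x w,
    map_mul, List.length_cons]
  simp [kappa_word, pow_succ', mul_smul]

theorem nuMap_comp_mulLeft_letter (x : Bool) :
    nuMap R ∘ₗ LinearMap.mulLeft R (word R [x]) =
      LinearMap.mulLeft R (ev R) ∘ₗ (Amap R (word R [x]) • nuMap R + kappa R) := by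
  refine linearMap_ext_word fun w => ?_
  rw [LinearMap.comp_apply, LinearMap.mulLeft_apply, ← word_cons, nuMap_word, word_cons R x w,
    Cmap_letter_mul, List.length_cons]
  simp [kappa_word, nuMap_word, pow_succ', mul_smul, add_smul, mul_add]

/-- The convolution `(f ⋆ g)(u) = Σ_u f(u₍₁₎)·b·g(u₍₂₎)`, in which the letter deleted by the
coproduct is replaced by `b`. -/
def bConv (f g : AB R →ₗ[R] AB R) : AB R →ₗ[R] AB R :=
  LinearMap.mul' R (AB R) ∘ₗ TensorProduct.map (LinearMap.mulRight R (bv R) ∘ₗ f) g ∘ₗ Delta R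

theorem sigmaMap_eq_bConv : sigmaMap R = bConv R (kappa R) (Tmap R) :=
  rfl

section bConv

variable {R} (f f' g : AB R →ₗ[R] AB R)

theorem bConv_one : bConv R f g 1 = 0 := by
  simp [bConv, Delta_one]

theorem bConv_word (w : List Bool) :
    bConv R f g (word R w) = ∑ i ∈ Finset.range w.length,
      f (word R (w.take i)) * bv R * g (word R (w.drop (i + 1))) := by
  simp [bConv, Delta, onBasis_word]

theorem bConv_letter_mul (x : Bool) (u : AB R) :
    bConv R f g (word R [x] * u) =
      f 1 * bv R * g u + bConv R (f ∘ₗ LinearMap.mulLeft R (word R [x])) g u := by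
  simp only [bConv, ← LinearMap.comp_assoc (LinearMap.mulLeft R _), ← LinearMap.map_comp_rTensor]
  simp [Delta_letter_mul]

theorem bConv_add_left : bConv R (f + f') g = bConv R f g + bConv R f' g := by
  refine linearMap_ext_word fun w => ?_
  simp [bConv_word, add_mul, Finset.sum_add_distrib]

theorem bConv_smul_left (r : R) : bConv R (r • f) g = r • bConv R f g := by
  refine linearMap_ext_word fun w => ?_
  simp [bConv_word, Finset.smul_sum]

theorem bConv_mulLeft_comp_left (v : AB R) :
    bConv R (LinearMap.mulLeft R v ∘ₗ f) g = LinearMap.mulLeft R v ∘ₗ bConv R f g := by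
  refine linearMap_ext_word fun w => ?_
  simp [bConv_word, mul_assoc]

end bConv

theorem segments_cons_map_add (w : List Bool) (i : ℕ) (l : List ℕ) :
    segments w (i :: l.map (· + (i + 1))) = w.take i :: segments (w.drop (i + 1)) l := by
  simp [segments, Function.comp_def]

theorem segments_ne_nil (w : List Bool) (l : List ℕ) : segments w l ≠ [] := by
  cases l <;> simp [segments]

theorem chainProd_cons {s : List Bool} {l : List (List Bool)} (hl : l ≠ []) :
    chainProd R (s :: l) = nuMap R (word R s) * bv R * chainProd R l := by
  cases l with
  | nil => exact absurd rfl hl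
  | cons _ _ => rw [chainProd]; simp

theorem Tmap_word (w : List Bool) :
    Tmap R (word R w) = ∑ S : Finset (Fin w.length), chainProd R (segments w (cutList S)) := by
  rw [Tmap, onBasis_word]
  rfl

theorem Tmap_eq_kappa_add_bConv : Tmap R = kappa R + bConv R (nuMap R) (Tmap R) := by
  refine linearMap_ext_word fun w => ?_
  rw [Tmap_word, sum_cutList_eq_sum_min _ fun l => chainProd R (segments w l),
    LinearMap.add_apply, bConv_word]
  congr 1
  · simp [segments, chainProd]
  · refine Finset.sum_congr rfl fun i _ => ?_
    rw [Tmap_word, List.length_drop, Finset.mul_sum]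
    simp only [segments_cons_map_add, chainProd_cons R (segments_ne_nil _ _)]

theorem Tmap_one : Tmap R 1 = 1 := by
  rw [Tmap_eq_kappa_add_bConv, LinearMap.add_apply, kappa_one, bConv_one, add_zero]

theorem sigmaMap_one : sigmaMap R 1 = 0 :=
  bConv_one _ _

theorem sigmaMap_letter_mul (x : Bool) (u : AB R) :
    sigmaMap R (word R [x] * u) =
      bv R * Tmap R u + Amap R (word R [x]) • (ev R * sigmaMap R u) := by
  rw [sigmaMap_eq_bConv, bConv_letter_mul, kappa_one, one_mul, kappa_comp_mulLeft_letter,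
    bConv_smul_left, bConv_mulLeft_comp_left]
  rfl

theorem bConv_nuMap_letter_mul (x : Bool) (u : AB R) (g : AB R →ₗ[R] AB R) :
    bConv R (nuMap R) g (word R [x] * u) =
      2 * bv R * g u +
        ev R * (Amap R (word R [x]) • bConv R (nuMap R) g u + bConv R (kappa R) g u) := by
  rw [bConv_letter_mul, nuMap_one, nuMap_comp_mulLeft_letter, bConv_mulLeft_comp_left,
    bConv_add_left, bConv_smul_left]
  rfl

theorem Tmap_letter_mul (x : Bool) (u : AB R) :
    Tmap R (word R [x] * u) =
      2 * bv R * Tmap R u + Amap R (word R [x]) • (ev R * Tmap R u) + ev R * sigmaMap R u := by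
  have Tmap_apply := LinearMap.congr_fun (Tmap_eq_kappa_add_bConv R)
  have kappa_letter_mul : kappa R (word R [x] * u) = Amap R (word R [x]) • (ev R * kappa R u) :=
    LinearMap.congr_fun (kappa_comp_mulLeft_letter R x) u
  calc Tmap R (word R [x] * u)
      = Amap R (word R [x]) • (ev R * kappa R u) + (2 * bv R * Tmap R u +
          ev R * (Amap R (word R [x]) • bConv R (nuMap R) (Tmap R) u + sigmaMap R u)) := by
        rw [Tmap_apply, LinearMap.add_apply, kappa_letter_mul, bConv_nuMap_letter_mul,
          sigmaMap_eq_bConv]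
    _ = 2 * bv R * Tmap R u + Amap R (word R [x]) • (ev R * (kappa R u +
          bConv R (nuMap R) (Tmap R) u)) + ev R * sigmaMap R u := by
        rw [mul_add, mul_add, mul_smul_comm, smul_add]
        abel
    _ = _ := by rw [← LinearMap.add_apply, ← Tmap_eq_kappa_add_bConv]

theorem tchebyshev_sigma_recursion_general :
    Tmap R 1 = 1 ∧ sigmaMap R 1 = 0 ∧
    ∀ u : AB R,
      Tmap R (av R * u) = (av R + bv R) * Tmap R u + (av R - bv R) * sigmaMap R u ∧
      Tmap R (bv R * u) = 2 * bv R * Tmap R u + (av R - bv R) * sigmaMap R u ∧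
      sigmaMap R (av R * u) = bv R * Tmap R u + (av R - bv R) * sigmaMap R u ∧
      sigmaMap R (bv R * u) = bv R * Tmap R u := by
  refine ⟨Tmap_one R, sigmaMap_one R, fun u => ⟨?_, ?_, ?_, ?_⟩⟩
  · have two_bv_add_ev : 2 * bv R + ev R = av R + bv R := by rw [ev]; noncomm_ring
    rw [av, Tmap_letter_mul, ← av, Amap_av, one_smul, ← add_mul, two_bv_add_ev, ev]
  · rw [bv, Tmap_letter_mul, ← bv, Amap_bv, zero_smul, add_zero, ev]
  · rw [av, sigmaMap_letter_mul, ← av, Amap_av, one_smul, ev]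
  · rw [bv, sigmaMap_letter_mul, ← bv, Amap_bv, zero_smul, add_zero]

end Recursion

theorem tchebyshev_sigma_recursion :
    Tmap ℤ 1 = 1 ∧ sigmaMap ℤ 1 = 0 ∧
    ∀ u : AB ℤ,
      Tmap ℤ (av ℤ * u)
          = (av ℤ + bv ℤ) * Tmap ℤ u + (av ℤ - bv ℤ) * sigmaMap ℤ u ∧
      Tmap ℤ (bv ℤ * u)
          = 2 * bv ℤ * Tmap ℤ u + (av ℤ - bv ℤ) * sigmaMap ℤ u ∧
      sigmaMap ℤ (av ℤ * u)
          = bv ℤ * Tmap ℤ u + (av ℤ - bv ℤ) * sigmaMap ℤ u ∧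
      sigmaMap ℤ (bv ℤ * u) = bv ℤ * Tmap ℤ u :=
  tchebyshev_sigma_recursion_general ℤ

end Tcheb
end
end

section
/- For all graded posets P and Q of rank at least 1, the ab-index of the Tchebyshev transform of the Cartesian product equals the ab-index of the dual diamond product of the two Tchebyshev transforms: Ψ(T(P × Q)) = Ψ(T(P) ◇* T(Q)). -/
open scoped TensorProduct

noncomputable section

namespace Tcheb

/-! The ab-index of a bounded poset is determined by the branching of the rank function along
chains: if a rank-preserving relation between two posets lifts, above any two related elements, to a
bijection of the elements strictly above them, then it lifts to a weight-preserving bijection of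
chains, and the ab-indices agree.

In `T(P)` an element `[x', w]` lies above `[x, y]` iff `x' = x` and `y ≤ w`, or `y ≤ x'`. Replacing
`x'` by `w` in the first case, the elements weakly above `[x, y]` become the pairs `y ≤ t ≤ w`, with
the upper endpoint `w` unchanged. For a product these pairs are pairs of such pairs in the two
factors, so relating `[x, (y, z)]` to `([x₁, y], [x₂, z])`, and maximum to maximum, is a relation of
the required kind between `T(P × Q)` and `T(P) ◇* T(Q)`. The two posets themselves need not be
isomorphic. -/

/-! ### Chains and bisimulations -/

section Chains

variable {A B X Y : Type}

/-- The chains `a = x₀ < x₁ < ⋯ < xₙ` with `n` steps that start at a given element `a`. -/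
def ChainFrom (lt : A → A → Prop) (a : A) (n : ℕ) : Type :=
  {f : Fin (n + 1) → A // IsStrictChain lt f ∧ f 0 = a}

instance (lt : A → A → Prop) (a : A) : Unique (ChainFrom lt a 0) where
  default := ⟨fun _ => a, fun i j h => absurd h (by lia), rfl⟩
  uniq f := Subtype.ext <| funext fun i => (congrArg f.1 (Fin.fin_one_eq_zero i)).trans f.2.2

theorem isStrictChain_cons_iff {lt : A → A → Prop} [IsTrans A lt] {n : ℕ} (a : A)
    (f : Fin (n + 1) → A) :
    IsStrictChain lt (Fin.cons a f : Fin (n + 2) → A) ↔ lt a (f 0) ∧ IsStrictChain lt f := by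
  simp only [IsStrictChain, Fin.forall_fin_succ (n := n + 1), Fin.cons_zero, Fin.cons_succ,
    Fin.succ_lt_succ_iff, Fin.succ_pos, Fin.not_lt_zero, forall_const, false_imp_iff,
    true_and]
  refine and_congr_left fun hf => ⟨fun h => h 0, fun h i => ?_⟩
  rcases Fin.eq_zero_or_eq_succ i with rfl | ⟨j, rfl⟩
  · exact h
  · exact _root_.trans h (hf 0 j.succ j.succ_pos)

/-- Splitting a chain into its first step and the rest. -/
def chainFromSuccEquiv (lt : A → A → Prop) [IsTrans A lt] (a : A) (n : ℕ) :
    ChainFrom lt a (n + 1) ≃ Σ x : {x // lt a x}, ChainFrom lt x.1 n where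
  toFun f := ⟨⟨f.1 1, by simpa only [f.2.2] using f.2.1 0 1 Fin.zero_lt_one⟩,
    Fin.tail f.1, fun i j h => f.2.1 i.succ j.succ (Fin.succ_lt_succ_iff.2 h), rfl⟩
  invFun f := ⟨Fin.cons a f.2.1,
    (isStrictChain_cons_iff a f.2.1).2 ⟨f.2.2.2.symm ▸ f.1.2, f.2.2.1⟩, rfl⟩
  left_inv := by
    rintro ⟨f, hf, rfl⟩
    exact Subtype.ext (Fin.cons_self_tail f)
  right_inv := by
    rintro ⟨⟨x, hx⟩, f, hf, hx₀ : f 0 = x⟩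
    subst hx₀
    rfl

theorem exists_chainFrom_equiv {ltA : A → A → Prop} {ltB : B → B → Prop} [IsTrans A ltA]
    [IsTrans B ltB] {S : A → B → Prop}
    (hup : ∀ a b, S a b → ∃ e : {x // ltA a x} ≃ {y // ltB b y}, ∀ x, S x.1 (e x).1) (n : ℕ)
    {a : A} {b : B} (hab : S a b) :
    ∃ e : ChainFrom ltA a n ≃ ChainFrom ltB b n, ∀ f i, S (f.1 i) ((e f).1 i) := by
  induction n generalizing a b with
  | zero =>
    refine ⟨Equiv.ofUnique _ _, fun f i => ?_⟩
    rw [Fin.fin_one_eq_zero i, f.2.2]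
    exact hab
  | succ n ih =>
    obtain ⟨e, he⟩ := hup a b hab
    choose tailEquiv htail using fun x => ih (he x)
    refine ⟨(chainFromSuccEquiv ltA a n).trans
      ((Equiv.sigmaCongr e tailEquiv).trans (chainFromSuccEquiv ltB b n).symm), fun f i => ?_⟩
    cases i using Fin.cases with
    | zero => exact f.2.2.symm ▸ hab
    | succ j => exact htail _ (chainFromSuccEquiv ltA a n f).2 j

theorem psiRel_eq_finsum_chainFrom (R : Type) [CommRing R] (lt : A → A → Prop) (rk : A → ℕ)
    (b t : A) :
    PsiRel R lt rk b t =
      ∑ᶠ (n : ℕ), ∑ᶠ (f : ChainFrom lt b n) (_ : f.1 (Fin.last n) = t), chainWt R rk f.1 := by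
  classical
  refine finsum_congr fun n => Eq.trans (finsum_congr fun f => ?_)
    (finsum_subtype_eq_finsum_cond (f := fun f : Fin (n + 1) → A =>
      ∑ᶠ _ : f (Fin.last n) = t, chainWt R rk f) fun f => IsStrictChain lt f ∧ f 0 = b).symm
  simp only [finsum_eq_if, ← and_assoc, ite_and]

theorem psiRel_eq_of_bisimulation (R : Type) [CommRing R] {ltA : A → A → Prop}
    {ltB : B → B → Prop} [IsTrans A ltA] [IsTrans B ltB] {rkA : A → ℕ} {rkB : B → ℕ} {tA : A}
    {tB : B} {S : A → B → Prop} (htop : ∀ a b, S a b → (a = tA ↔ b = tB))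
    (hrk : ∀ a b, S a b → rkA a = rkB b)
    (hup : ∀ a b, S a b → ∃ e : {x // ltA a x} ≃ {y // ltB b y}, ∀ x, S x.1 (e x).1)
    {a : A} {b : B} (hab : S a b) :
    PsiRel R ltA rkA a tA = PsiRel R ltB rkB b tB := by
  simp only [psiRel_eq_finsum_chainFrom]
  refine finsum_congr fun n => ?_
  obtain ⟨e, he⟩ := exists_chainFrom_equiv hup n hab
  refine finsum_eq_of_bijective e e.bijective fun f => ?_
  have hwt : chainWt R rkA f.1 = chainWt R rkB (e f).1 := by
    simp only [chainWt, hrk _ _ (he f _)]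
  exact finsum_congr_Prop (propext (htop _ _ (he f _))) fun _ => hwt

/-- A predicate on `Option X` that holds at `none` cuts out `none` and a subtype of `X`. -/
def subtypeOptionEquiv {P : Option X → Prop} (h : P none) :
    {x // P x} ≃ Option {x // P (some x)} where
  toFun
    | ⟨none, _⟩ => none
    | ⟨some x, hx⟩ => some ⟨x, hx⟩
  invFun
    | none => ⟨none, h⟩
    | some x => ⟨some x.1, x.2⟩
  left_inv := by rintro ⟨_ | x, hx⟩ <;> rfl
  right_inv := by rintro (_ | x) <;> rfl

theorem psiRel_option_eq_of_bisimulation (R : Type) [CommRing R]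
    {ltX : Option X → Option X → Prop} {ltY : Option Y → Option Y → Prop}
    [IsTrans (Option X) ltX] [IsTrans (Option Y) ltY] {rkX : Option X → ℕ} {rkY : Option Y → ℕ}
    {S : X → Y → Prop} (hX_top : ∀ x, ltX (some x) none) (hY_top : ∀ y, ltY (some y) none)
    (hX_max : ∀ x, ¬ ltX none x) (hY_max : ∀ y, ¬ ltY none y) (hrk_top : rkX none = rkY none)
    (hrk : ∀ x y, S x y → rkX (some x) = rkY (some y))
    (hup : ∀ x y, S x y → ∃ e : {x' // ltX (some x) (some x')} ≃ {y' // ltY (some y) (some y')},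
      ∀ x', S x'.1 (e x').1)
    {x : X} {y : Y} (hxy : S x y) :
    PsiRel R ltX rkX (some x) none = PsiRel R ltY rkY (some y) none := by
  refine psiRel_eq_of_bisimulation R (S := Option.Rel S) ?_ ?_ ?_ (.some hxy)
  · rintro _ _ (_ | _) <;> simp only [reduceCtorEq]
  · rintro _ _ (h | _)
    · exact hrk _ _ h
    · exact hrk_top
  · rintro _ _ (h | _)
    · obtain ⟨e, he⟩ := hup _ _ h
      refine ⟨(subtypeOptionEquiv (hX_top _)).trans
        (e.optionCongr.trans (subtypeOptionEquiv (hY_top _)).symm), ?_⟩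
      rintro ⟨_ | x', hx'⟩
      · exact .none
      · exact .some (he ⟨x', hx'⟩)
    · have : IsEmpty {x // ltX none x} := ⟨fun x => hX_max _ x.2⟩
      have : IsEmpty {y // ltY none y} := ⟨fun y => hY_max _ y.2⟩
      exact ⟨Equiv.equivOfIsEmpty _ _, isEmptyElim⟩

end Chains

/-! ### The order of the Tchebyshev transform -/

section Endpoints

variable {α : Type} [PartialOrder α]

/-- The lower endpoint `x` of the element `[x, y]`. -/
def TPel.lower (p : TPel α) : WithBot α := p.1.1

/-- The upper endpoint `y` of the element `[x, y]`. -/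
def TPel.upper (p : TPel α) : α := p.1.2

theorem TPel.lower_lt_upper (p : TPel α) : p.lower < (p.upper : WithBot α) := p.2

end Endpoints

section TchebyshevOrder

variable {α β : Type} [PartialOrder α] [PartialOrder β] [BoundedOrder α] [BoundedOrder β]

instance : IsTrans (TP α) (TPle α) := inferInstanceAs (IsTrans _ (Relation.ReflTransGen _))

instance : IsTrans (TP α) (TPlt α) := inferInstanceAs (IsTrans _ (Relation.TransGen _))

theorem zmap_lt_zmap_of_TPcov {p q : TP α} (h : TPcov α p q) : zmap α p < zmap α q := by
  cases h with
  | up _ _ hc | same _ _ hc => exact WithTop.coe_lt_coe.2 hc.lt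
  | top _ => exact WithTop.coe_lt_top _

theorem zmap_lt_zmap_of_TPlt {p q : TP α} (h : TPlt α p q) : zmap α p < zmap α q := by
  have hz := Relation.TransGen.lift (zmap α) (fun _ _ => zmap_lt_zmap_of_TPcov) _ _ h
  rwa [Function.onFun, Relation.transGen_eq_self] at hz

theorem not_TPtop_TPlt (q : TP α) : ¬ TPlt α (TPtop α) q :=
  fun h => not_top_lt (zmap_lt_zmap_of_TPlt h)

theorem TPlt_some_some_iff (p q : TPel α) :
    TPlt α (some p) (some q) ↔ TPle α (some p) (some q) ∧ p.upper ≠ q.upper := by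
  constructor
  · exact fun h => ⟨h.to_reflTransGen, (WithTop.coe_lt_coe.1 (zmap_lt_zmap_of_TPlt h)).ne⟩
  · rintro ⟨hle, hne⟩
    refine (Relation.reflTransGen_iff_eq_or_transGen.1 hle).resolve_left fun heq => hne ?_
    rw [Option.some.inj heq]

theorem TPle_of_le [Finite α] {x : WithBot α} {y w : α} (hyw : y ≤ w)
    (hxy : x < (y : WithBot α)) (hxw : x < (w : WithBot α)) :
    TPle α (some ⟨(x, y), hxy⟩) (some ⟨(x, w), hxw⟩) := by
  classical
  have := Fintype.ofFinite α
  have := Fintype.toLocallyFiniteOrder (α := α)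
  induction le_iff_reflTransGen_covBy.1 hyw with
  | refl => exact .refl
  | @tail u v hyu huv ih =>
    have hyu : y ≤ u := le_iff_reflTransGen_covBy.2 hyu
    have hxu : x < (u : WithBot α) := hxy.trans_le (WithBot.coe_le_coe.2 hyu)
    exact (ih hyu hxu).tail (.same hxu hxw huv)

theorem TPle_of_le_of_lt [Finite α] {x : WithBot α} {y v w : α} (hyv : y ≤ v) (hvw : v < w)
    (hxy : x < (y : WithBot α)) :
    TPle α (some ⟨(x, y), hxy⟩) (some ⟨((v : WithBot α), w), WithBot.coe_lt_coe.2 hvw⟩) := by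
  obtain ⟨u, hvu, huw⟩ := exists_covBy_le_of_lt hvw
  have hxv : x < (v : WithBot α) := hxy.trans_le (WithBot.coe_le_coe.2 hyv)
  have hvu' : (v : WithBot α) < (u : WithBot α) := WithBot.coe_lt_coe.2 hvu.lt
  exact ((TPle_of_le hyv hxy hxv).tail (.up hxv hvu' hvu)).trans (TPle_of_le huw hvu' _)

theorem endpoints_of_TPle {p q : TPel α} (h : TPle α (some p) (some q)) :
    (q.lower = p.lower ∧ p.upper ≤ q.upper) ∨ (p.upper : WithBot α) ≤ q.lower := by
  generalize hr : (some q : TP α) = r at h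
  induction h generalizing q with
  | refl =>
    obtain rfl := Option.some.inj hr
    exact .inl ⟨rfl, le_rfl⟩
  | tail _ hc ih =>
    cases hc with
    | up hxy _ _ =>
      obtain rfl := Option.some.inj hr
      exact .inr ((ih rfl).elim (fun h => WithBot.coe_le_coe.2 h.2) fun h => h.trans hxy.le)
    | same _ _ hc =>
      obtain rfl := Option.some.inj hr
      exact (ih rfl).imp_left (And.imp_right fun h => h.trans hc.le)
    | top _ => exact absurd hr (Option.some_ne_none q)

theorem TPle_some_some_iff [Finite α] (p q : TPel α) :
    TPle α (some p) (some q) ↔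
      (q.lower = p.lower ∧ p.upper ≤ q.upper) ∨ (p.upper : WithBot α) ≤ q.lower := by
  refine ⟨endpoints_of_TPle, ?_⟩
  obtain ⟨⟨x, y⟩, hp⟩ := p
  obtain ⟨⟨x', w⟩, hq⟩ := q
  rintro (⟨rfl, hyw⟩ | hyx')
  · exact TPle_of_le hyw hp hq
  · obtain ⟨v, rfl, hyv⟩ := WithBot.coe_le_iff.1 hyx'
    exact TPle_of_le_of_lt hyv (WithBot.coe_lt_coe.1 hq) hp

theorem TPlt_TPtop [Finite α] (p : TPel α) : TPlt α (some p) (TPtop α) :=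
  have htop := p.2.trans_le (WithBot.coe_le_coe.2 le_top)
  .tail' (TPle_of_le le_top p.2 htop) (.top htop)

/-- The intervals `[t, w]` of the filter above `y`, including the one-element ones. -/
def IntervalAbove (y : α) : Type := {i : α × α // y ≤ i.1 ∧ i.1 ≤ i.2}

/-- The intervals above an element of a product are the pairs of intervals in the factors. -/
def intervalAboveProdEquiv (y : α × β) :
    IntervalAbove y ≃ IntervalAbove y.1 × IntervalAbove y.2 where
  toFun i := (⟨(i.1.1.1, i.1.2.1), i.2.1.1, i.2.2.1⟩, ⟨(i.1.1.2, i.1.2.2), i.2.1.2, i.2.2.2⟩)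
  invFun i := ⟨((i.1.1.1, i.2.1.1), (i.1.1.2, i.2.1.2)), ⟨i.1.2.1, i.2.2.1⟩, i.1.2.2, i.2.2.2⟩

/-- The elements of `T(P) ∖ {1̂}` weakly above `p`. -/
abbrev TPelAbove (p : TPel α) : Type := {q : TPel α // TPle α (some p) (some q)}

open Classical in
/-- For `p = [x, y]`, the element `[t, w]` of `T(P)` encoded by `y ≤ t ≤ w`, where the degenerate
`t = w` encodes `[x, w]`. -/
def ofIntervalAbove [Finite α] (p : TPel α) (i : IntervalAbove p.upper) : TPelAbove p :=
  if h : i.1.1 = i.1.2 then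
    ⟨⟨(p.lower, i.1.2), p.lower_lt_upper.trans_le (WithBot.coe_le_coe.2 (i.2.1.trans i.2.2))⟩,
      (TPle_some_some_iff _ _).2 (.inl ⟨rfl, i.2.1.trans i.2.2⟩)⟩
  else
    ⟨⟨(i.1.1, i.1.2), WithBot.coe_lt_coe.2 (i.2.2.lt_of_ne h)⟩,
      (TPle_some_some_iff _ _).2 (.inr (WithBot.coe_le_coe.2 i.2.1))⟩

theorem ofIntervalAbove_upper [Finite α] (p : TPel α) (i : IntervalAbove p.upper) :
    (ofIntervalAbove p i).1.upper = i.1.2 := by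
  unfold ofIntervalAbove
  split_ifs <;> rfl

theorem ofIntervalAbove_injective [Finite α] (p : TPel α) :
    Function.Injective (ofIntervalAbove p) := by
  have lower_ne (i : IntervalAbove p.upper) : p.lower ≠ (i.1.1 : WithBot α) :=
    (p.lower_lt_upper.trans_le (WithBot.coe_le_coe.2 i.2.1)).ne
  intro i j hij
  have hupper : i.1.2 = j.1.2 := by
    rw [← ofIntervalAbove_upper p i, hij, ofIntervalAbove_upper]
  have hlower := congrArg (fun q => q.1.lower) hij
  refine Subtype.ext (Prod.ext ?_ hupper)
  unfold ofIntervalAbove at hlower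
  split_ifs at hlower with hi hj hj
  · rw [hi, hj, hupper]
  · exact absurd hlower (lower_ne j)
  · exact absurd hlower.symm (lower_ne i)
  · exact WithBot.coe_injective hlower

theorem ofIntervalAbove_surjective [Finite α] (p : TPel α) :
    Function.Surjective (ofIntervalAbove p) := by
  rintro ⟨⟨⟨x', w⟩, hq⟩, hle⟩
  rcases (TPle_some_some_iff _ _).1 hle with ⟨rfl, hyw⟩ | hyx'
  · exact ⟨⟨(w, w), hyw, le_rfl⟩, dif_pos rfl⟩
  · obtain ⟨v, rfl, hyv⟩ := WithBot.coe_le_iff.1 hyx'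
    have hvw : v < w := WithBot.coe_lt_coe.1 hq
    exact ⟨⟨(v, w), hyv, hvw.le⟩, dif_neg hvw.ne⟩

/-- The bijection between the elements of `T(P) ∖ {1̂}` weakly above `[x, y]` and the intervals of
`P` above `y`, which preserves upper endpoints. -/
def intervalAboveEquiv [Finite α] (p : TPel α) : IntervalAbove p.upper ≃ TPelAbove p :=
  .ofBijective (ofIntervalAbove p) ⟨ofIntervalAbove_injective p, ofIntervalAbove_surjective p⟩

theorem intervalAboveEquiv_upper [Finite α] (p : TPel α) (i : IntervalAbove p.upper) :
    (intervalAboveEquiv p i).1.upper = i.1.2 :=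
  ofIntervalAbove_upper p i

theorem exists_TPelAbove_prod_equiv [Finite α] [Finite β] {p : TPel (α × β)} {q : TPel α}
    {r : TPel β} (h : p.upper = (q.upper, r.upper)) :
    ∃ e : TPelAbove p ≃ TPelAbove q × TPelAbove r,
      ∀ p', p'.1.upper = ((e p').1.1.upper, (e p').2.1.upper) := by
  obtain ⟨⟨x, _⟩, hp⟩ := p
  subst h
  refine ⟨(intervalAboveEquiv _).symm.trans ((intervalAboveProdEquiv _).trans
    ((intervalAboveEquiv q).prodCongr (intervalAboveEquiv r))), fun p' => ?_⟩
  obtain ⟨i, rfl⟩ := (intervalAboveEquiv _).surjective p'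
  rw [Equiv.trans_apply, Equiv.symm_apply_apply]
  exact (intervalAboveEquiv_upper _ i).trans
    (Prod.ext (intervalAboveEquiv_upper q (intervalAboveProdEquiv _ i).1).symm
      (intervalAboveEquiv_upper r (intervalAboveProdEquiv _ i).2).symm)

end TchebyshevOrder

/-! ### The dual diamond product of two Tchebyshev transforms -/

section DualDiamond

theorem dsLT_isTrans {A B : Type} {leA ltA : A → A → Prop} {leB ltB : B → B → Prop}
    [IsTrans A leA] [IsTrans B leB] (hA : ∀ {x y z}, ltA x y → leA y z → ltA x z)
    (hB : ∀ {x y z}, ltB x y → leB y z → ltB x z) :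
    IsTrans (Option (A × B)) (dsLT leA ltA leB ltB) where
  trans
    | some _, some _, some _, ⟨hxy, hlt⟩, ⟨hyz, _⟩ =>
      ⟨⟨_root_.trans hxy.1 hyz.1, _root_.trans hxy.2 hyz.2⟩,
        hlt.imp (hA · hyz.1) (hB · hyz.2)⟩
    | some _, some _, none, _, _ => trivial

variable {α β : Type} [PartialOrder α] [PartialOrder β] [BoundedOrder α] [BoundedOrder β]

/-- The proper part `T(P) ∖ {1̂}` of the Tchebyshev transform, as the subtype from which the dual
diamond product is built. -/
abbrev ProperTP (α : Type) [PartialOrder α] [BoundedOrder α] : Type := {x : TP α // x ≠ TPtop α}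

/-- The elements `[x, y]` of `T(P)` are those different from `1̂`. -/
def properTPEquiv (α : Type) [PartialOrder α] [BoundedOrder α] : TPel α ≃ ProperTP α where
  toFun p := ⟨some p, Option.some_ne_none p⟩
  invFun u := Option.get (α := TPel α) u.1 (Option.isSome_iff_ne_none.2 u.2)
  left_inv _ := rfl
  right_inv _ := Subtype.ext (Option.some_get (α := TPel α) _)

/-- The strict order of the dual diamond product `T(P) ◇* T(Q)`. -/
abbrev diamondLT (α β : Type) [PartialOrder α] [PartialOrder β] [BoundedOrder α]
    [BoundedOrder β] : Option (ProperTP α × ProperTP β) → Option (ProperTP α × ProperTP β) → Prop :=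
  dsLT (fun x y => TPle α x.1 y.1) (fun x y => TPlt α x.1 y.1)
    (fun x y => TPle β x.1 y.1) (fun x y => TPlt β x.1 y.1)

/-- The rank function of the dual diamond product `T(P) ◇* T(Q)`. -/
def diamondRk (rkα : α → ℕ) (rkβ : β → ℕ) : Option (ProperTP α × ProperTP β) → ℕ :=
  fun d => d.elim ((rkα ⊤ + 1) + (rkβ ⊤ + 1) - 1) fun p =>
    TPrk α rkα p.1.1 + TPrk β rkβ p.2.1

instance : IsTrans _ (diamondLT α β) :=
  have : IsTrans (ProperTP α) fun x y => TPle α x.1 y.1 := ⟨fun _ _ _ => _root_.trans⟩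
  have : IsTrans (ProperTP β) fun x y => TPle β x.1 y.1 := ⟨fun _ _ _ => _root_.trans⟩
  dsLT_isTrans Relation.TransGen.trans_left Relation.TransGen.trans_left

theorem coe_properTPEquiv_symm (u : ProperTP α) :
    (some ((properTPEquiv α).symm u) : TP α) = u.1 :=
  congrArg Subtype.val ((properTPEquiv α).apply_symm_apply u)

/-- The pair `(y, z)` of upper endpoints of the element `([x₁, y], [x₂, z])`. -/
def upperPair (d : ProperTP α × ProperTP β) : α × β :=
  (((properTPEquiv α).symm d.1).upper, ((properTPEquiv β).symm d.2).upper)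

theorem diamondLT_some_some_iff (c d : ProperTP α × ProperTP β) :
    diamondLT α β (some c) (some d) ↔
      (TPle α c.1.1 d.1.1 ∧ TPle β c.2.1 d.2.1) ∧ upperPair c ≠ upperPair d := by
  have hlt : diamondLT α β (some c) (some d) ↔ (TPle α c.1.1 d.1.1 ∧ TPle β c.2.1 d.2.1) ∧
      (TPlt α c.1.1 d.1.1 ∨ TPlt β c.2.1 d.2.1) := Iff.rfl
  simp only [hlt, upperPair, ne_eq, Prod.ext_iff, not_and_or, ← coe_properTPEquiv_symm,
    TPlt_some_some_iff]
  tauto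

/-- The elements of `T(P)` weakly above a given one, with `T(P) ∖ {1̂}` encoded in either way. -/
def TPelAboveEquiv (u : ProperTP α) :
    TPelAbove ((properTPEquiv α).symm u) ≃ {v : ProperTP α // TPle α u.1 v.1} :=
  (properTPEquiv α).subtypeEquiv fun q => by rw [coe_properTPEquiv_symm]; rfl

theorem exists_weaklyAbove_equiv [Finite α] [Finite β] {p : TPel (α × β)}
    {c : ProperTP α × ProperTP β} (h : p.upper = upperPair c) :
    ∃ e : TPelAbove p ≃
        {d : ProperTP α × ProperTP β // TPle α c.1.1 d.1.1 ∧ TPle β c.2.1 d.2.1},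
      ∀ p', p'.1.upper = upperPair (e p').1 := by
  obtain ⟨e, he⟩ := exists_TPelAbove_prod_equiv h
  exact ⟨e.trans (((TPelAboveEquiv c.1).prodCongr (TPelAboveEquiv c.2)).trans
    Equiv.subtypeProdEquivProd.symm), he⟩

theorem exists_strictlyAbove_equiv [Finite α] [Finite β] {p : TPel (α × β)}
    {c : ProperTP α × ProperTP β} (h : p.upper = upperPair c) :
    ∃ e : {p' // TPlt (α × β) (some p) (some p')} ≃ {d // diamondLT α β (some c) (some d)},
      ∀ p', p'.1.upper = upperPair (e p').1 := by
  obtain ⟨e, he⟩ := exists_weaklyAbove_equiv h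
  let eStrict : {p' : TPelAbove p // p.upper ≠ p'.1.upper} ≃ _ :=
    e.subtypeEquiv (q := fun d => upperPair c ≠ upperPair d.1) fun p' => by rw [h, he]
  exact ⟨(Equiv.subtypeEquivRight fun p' => TPlt_some_some_iff p p').trans
    ((Equiv.subtypeSubtypeEquivSubtypeInter _ _).symm.trans
      (eStrict.trans ((Equiv.subtypeSubtypeEquivSubtypeInter _ _).trans
        (Equiv.subtypeEquivRight fun d => diamondLT_some_some_iff c d).symm))),
    fun p' => he ⟨p'.1, ((TPlt_some_some_iff _ _).1 p'.2).1⟩⟩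

end DualDiamond

theorem tchebyshev_product_diamond_general (R : Type) [CommRing R]
    (α β : Type) [Finite α] [Finite β] [PartialOrder α] [PartialOrder β]
    [BoundedOrder α] [BoundedOrder β] (rkα : α → ℕ) (rkβ : β → ℕ)
    (_hα : IsRankFun α rkα) (_hβ : IsRankFun β rkβ) :
    PsiRel R (TPlt (α × β)) (TPrk (α × β) fun p => rkα p.1 + rkβ p.2)
        (TPbot (α × β)) (TPtop (α × β)) =
      PsiRel R (diamondLT α β) (diamondRk rkα rkβ)
        (some (⟨TPbot α, TPbot_ne_TPtop α⟩, ⟨TPbot β, TPbot_ne_TPtop β⟩))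
        none := by
  have : IsTrans (Option (TPel (α × β))) (TPlt (α × β)) :=
    inferInstanceAs (IsTrans (TP (α × β)) _)
  refine psiRel_option_eq_of_bisimulation R (ltX := TPlt (α × β))
    (S := fun p d => p.upper = upperPair d) TPlt_TPtop (fun _ => trivial) not_TPtop_TPlt
    (fun _ => id) ?rank_top ?rank (fun _ _ => exists_strictlyAbove_equiv) rfl
  case rank_top =>
    change rkα ⊤ + rkβ ⊤ + 1 = (rkα ⊤ + 1) + (rkβ ⊤ + 1) - 1
    lia
  case rank =>
    intro p d hpd
    change rkα p.upper.1 + rkβ p.upper.2 = TPrk α rkα d.1.1 + TPrk β rkβ d.2.1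
    simp only [hpd, ← coe_properTPEquiv_symm]
    rfl

theorem tchebyshev_product_diamond
    (α β : Type) [Fintype α] [Fintype β] [PartialOrder α] [PartialOrder β]
    [BoundedOrder α] [BoundedOrder β] (rkα : α → ℕ) (rkβ : β → ℕ)
    (hα : IsRankFun α rkα) (hβ : IsRankFun β rkβ)
    (h1α : 1 ≤ rkα (⊤ : α)) (h1β : 1 ≤ rkβ (⊤ : β)) :
    PsiRel ℤ (TPlt (α × β)) (TPrk (α × β) fun p => rkα p.1 + rkβ p.2)
        (TPbot (α × β)) (TPtop (α × β)) =
      PsiRel ℤ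
        (dsLT (fun x y : {x : TP α // x ≠ TPtop α} => TPle α x.1 y.1)
              (fun x y : {x : TP α // x ≠ TPtop α} => TPlt α x.1 y.1)
              (fun x y : {x : TP β // x ≠ TPtop β} => TPle β x.1 y.1)
              (fun x y : {x : TP β // x ≠ TPtop β} => TPlt β x.1 y.1))
        (fun d => match d with
          | none => (rkα ⊤ + 1) + (rkβ ⊤ + 1) - 1
          | some p => TPrk α rkα p.1.1 + TPrk β rkβ p.2.1)
        (some (⟨TPbot α, TPbot_ne_TPtop α⟩, ⟨TPbot β, TPbot_ne_TPtop β⟩))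
        none := by
  convert tchebyshev_product_diamond_general ℤ α β rkα rkβ hα hβ using 3 with d
  cases d <;> rfl

end Tcheb
end
end
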